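/- arXiv:1412.3025 — 3 statements merged into one kernel-verified Lean document; each statement's English description precedes it below -/
import Mathlib

section
/- Let M be a monoid, E ⊆ M∖{1} a generating set, and η a factorization map on (M,E). Then η is a factorability structure on (M,E) if and only if η is a weak factorability structure and satisfies the recognition principle. -/
/-- The word length of `m` with respect to the generating set `E`:
the least `n` such that `m` is a product of `n` elements of `E`. -/
noncomputable def wordLength {M : Type*} [Monoid M] (E : Set M) (m : M) : ℕ :=
  sInf {n | ∃ l : List M, (∀ x ∈ l, x ∈ E) ∧ l.length = n ∧ l.prod = m}

/-- `E` is a generating set of the monoid `M`. -/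
def IsGenSet {M : Type*} [Monoid M] (E : Set M) : Prop :=
  ∀ m : M, ∃ l : List M, (∀ x ∈ l, x ∈ E) ∧ l.prod = m

/-- The pair `(a, b)` is geodesic with respect to `E`. -/
noncomputable def Geodesic {M : Type*} [Monoid M] (E : Set M) (a b : M) : Prop :=
  wordLength E (a * b) = wordLength E a + wordLength E b

/-- A factorization map `η = (η̄, η′)` on `(M, E)`. -/
noncomputable def IsFactorizationMap {M : Type*} [Monoid M] (E : Set M)
    (η : M → M × M) : Prop :=
  (∀ m, (η m).1 * (η m).2 = m) ∧
  (∀ m, wordLength E m = wordLength E (η m).1 + wordLength E (η m).2) ∧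
  (∀ m, m ≠ 1 → (η m).2 ∈ E) ∧
  η 1 = (1, 1)

/-- The map `f₁ : M³ → M³` applying `η` to the product of the two right entries,
with triples written `(x₃, x₂, x₁)`. -/
def f1 {M : Type*} [Monoid M] (η : M → M × M) (p : M × M × M) : M × M × M :=
  (p.1, η (p.2.1 * p.2.2))

/-- The map `f₂ : M³ → M³` applying `η` to the product of the two left entries. -/
def f2 {M : Type*} [Monoid M] (η : M → M × M) (p : M × M × M) : M × M × M :=
  ((η (p.1 * p.2.1)).1, (η (p.1 * p.2.1)).2, p.2.2)

/-- The sum of the word lengths of the entries of a triple. -/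
noncomputable def tnorm {M : Type*} [Monoid M] (E : Set M) (p : M × M × M) : ℕ :=
  wordLength E p.1 + wordLength E p.2.1 + wordLength E p.2.2

/-- `η` is a factorability structure on `(M, E)`: it is a factorization map and the
three maps `f₁f₂f₁f₂`, `f₂f₁f₂`, `f₂f₁f₂f₁ : M³ → M³` are equal in the graded sense. -/
noncomputable def IsFactorable {M : Type*} [Monoid M] (E : Set M) (η : M → M × M) : Prop :=
  IsFactorizationMap E η ∧
  ∀ p : M × M × M,
    (f1 η (f2 η (f1 η (f2 η p))) = f2 η (f1 η (f2 η p)) ∧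
     f2 η (f1 η (f2 η p)) = f2 η (f1 η (f2 η (f1 η p)))) ∨
    (tnorm E (f1 η (f2 η (f1 η (f2 η p)))) < tnorm E p ∧
     tnorm E (f2 η (f1 η (f2 η p))) < tnorm E p ∧
     tnorm E (f2 η (f1 η (f2 η (f1 η p)))) < tnorm E p)

/-- `η` is a weak factorability structure on `(M, E)`. -/
noncomputable def IsWeaklyFactorable {M : Type*} [Monoid M] (E : Set M)
    (η : M → M × M) : Prop :=
  IsFactorizationMap E η ∧
  ∀ x : M, ∀ t ∈ E,
    Geodesic E (η x).2 t →
    Geodesic E (η x).1 (η ((η x).2 * t)).1 →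
    Geodesic E x t ∧
    (η (x * t)).2 = (η ((η x).2 * t)).2 ∧
    (η (x * t)).1 = (η x).1 * (η ((η x).2 * t)).1

/-- `η` satisfies the recognition principle. -/
def RecognitionPrinciple {M : Type*} [Monoid M] (E : Set M) (η : M → M × M) : Prop :=
  ∀ m : M, ∀ a ∈ E, (η (m * a) = (m, a) ↔ η ((η m).2 * a) = ((η m).2, a))

/-!
The defining property of a weak factorability structure extends from generators `t` to arbitrary
right factors, by induction along a geodesic word for `t`. Hence `f₂f₁f₂` strictly lowers the norm
of every non-geodesic triple, and sends a geodesic triple with product `m` to a normal form that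
depends only on `m`. As `f₁` preserves the product, `f₂f₁f₂` and `f₂f₁f₂f₁` agree in the graded
sense, and the recognition principle makes `f₁` fix the normal form.

Conversely, call a pair `(a, b)` stable if `η (a * b) = (a, b)`. Comparing the three maps of a
factorable monoid on the triples `(m, a, 1)` and `(1, m, a)` gives the two implications of the
recognition principle; comparing them on `(η̄ x, η′ x, t)` then gives weak factorability.
-/

section WordLength

variable {M : Type*} [Monoid M] {E : Set M}

theorem IsGenSet.exists_list_length_eq_wordLength (hgen : IsGenSet E) (m : M) :
    ∃ l : List M, (∀ x ∈ l, x ∈ E) ∧ l.length = wordLength E m ∧ l.prod = m := by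
  obtain ⟨l, hl, hm⟩ := hgen m
  exact Nat.sInf_mem (s := {n | ∃ l : List M, (∀ x ∈ l, x ∈ E) ∧ l.length = n ∧ l.prod = m})
    ⟨_, l, hl, rfl, hm⟩

theorem wordLength_list_prod_le {l : List M} (hl : ∀ x ∈ l, x ∈ E) :
    wordLength E l.prod ≤ l.length :=
  Nat.sInf_le ⟨l, hl, rfl, rfl⟩

theorem wordLength_one : wordLength E (1 : M) = 0 :=
  Nat.le_zero.1 (wordLength_list_prod_le (l := []) (by simp))

theorem wordLength_le_one_of_mem {e : M} (he : e ∈ E) : wordLength E e ≤ 1 := by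
  simpa using wordLength_list_prod_le (E := E) (l := [e]) (by simpa using he)

theorem IsGenSet.wordLength_mul_le (hgen : IsGenSet E) (a b : M) :
    wordLength E (a * b) ≤ wordLength E a + wordLength E b := by
  obtain ⟨k, hkE, hk, rfl⟩ := hgen.exists_list_length_eq_wordLength a
  obtain ⟨l, hlE, hl, rfl⟩ := hgen.exists_list_length_eq_wordLength b
  rw [← hk, ← hl, ← List.prod_append, ← List.length_append]
  exact wordLength_list_prod_le fun x hx => (List.mem_append.1 hx).elim (hkE x) (hlE x)

theorem IsGenSet.wordLength_eq_zero_iff (hgen : IsGenSet E) {m : M} :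
    wordLength E m = 0 ↔ m = 1 := by
  refine ⟨fun hm => ?_, fun hm => hm ▸ wordLength_one⟩
  obtain ⟨l, -, hl, rfl⟩ := hgen.exists_list_length_eq_wordLength m
  rw [hm, List.length_eq_zero_iff] at hl
  rw [hl, List.prod_nil]

theorem IsGenSet.wordLength_of_mem (hgen : IsGenSet E) (h1 : (1 : M) ∉ E) {e : M}
    (he : e ∈ E) : wordLength E e = 1 := by
  have hne : wordLength E e ≠ 0 := fun h => h1 (hgen.wordLength_eq_zero_iff.1 h ▸ he)
  have hle := wordLength_le_one_of_mem he
  omega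

theorem geodesic_one_left (a : M) : Geodesic E 1 a := by
  simp [Geodesic, wordLength_one]

theorem geodesic_one_right (a : M) : Geodesic E a 1 := by
  simp [Geodesic, wordLength_one]

/-- Both sides say that `a * b * c` has word length `N a + N b + N c`. -/
theorem IsGenSet.geodesic_assoc (hgen : IsGenSet E) (a b c : M) :
    Geodesic E a b ∧ Geodesic E (a * b) c ↔ Geodesic E b c ∧ Geodesic E a (b * c) := by
  have hab := hgen.wordLength_mul_le a b
  have hbc := hgen.wordLength_mul_le b c
  have hab_c := hgen.wordLength_mul_le (a * b) c
  have ha_bc := hgen.wordLength_mul_le a (b * c)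
  rw [mul_assoc] at hab_c
  simp only [Geodesic, mul_assoc]
  omega

theorem IsGenSet.geodesic_induction (hgen : IsGenSet E) {P : M → Prop} (one : P 1)
    (mul : ∀ r, ∀ s ∈ E, Geodesic E r s → P r → P (r * s)) (m : M) : P m := by
  obtain ⟨l, hlE, hl, rfl⟩ := hgen.exists_list_length_eq_wordLength m
  replace hl := hl.le
  induction l using List.reverseRecOn with
  | nil => exact one
  | append_singleton l s ih =>
    have hlE' : ∀ x ∈ l, x ∈ E := fun x hx => hlE x (by simp [hx])
    have hs : s ∈ E := hlE s (by simp)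
    have hNs := wordLength_le_one_of_mem hs
    have hNl := wordLength_list_prod_le hlE'
    rw [List.prod_append, List.prod_singleton, List.length_append, List.length_singleton] at hl
    have hNmul := hgen.wordLength_mul_le l.prod s
    rw [List.prod_append, List.prod_singleton]
    exact mul _ s hs (by rw [Geodesic]; omega) (ih hlE' (by omega))

end WordLength

section Triples

variable {M : Type*} [Monoid M]

/-- The product `x₃ * x₂ * x₁` in `M` of the entries of a triple `(x₃, x₂, x₁)`. -/
def tripleProd (p : M × M × M) : M :=
  p.1 * p.2.1 * p.2.2

/-- A geodesic triple: no word length is lost when its entries are multiplied. This is the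
analogue of `Geodesic` for triples. -/
def IsGeodesicTriple (E : Set M) (p : M × M × M) : Prop :=
  wordLength E (tripleProd p) = tnorm E p

/-- The normal form of `m` as a triple, obtained by splitting off a generator on the right twice:
the entries are `η̄ (η̄ m)`, `η′ (η̄ m)` and `η′ m`. -/
def normalTriple (η : M → M × M) (m : M) : M × M × M :=
  ((η (η m).1).1, (η (η m).1).2, (η m).2)

/-- A stable pair: one that is the `η`-factorization of its own product. -/
def IsStablePair (η : M → M × M) (a b : M) : Prop :=
  η (a * b) = (a, b)

variable {E : Set M}

theorem IsStablePair.apply_mul {η : M → M × M} {a b : M} (hab : IsStablePair η a b) :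
    η (a * b) = (a, b) :=
  hab

theorem IsGeodesicTriple.wordLength_tripleProd {p : M × M × M} (hp : IsGeodesicTriple E p) :
    wordLength E (tripleProd p) = tnorm E p :=
  hp

theorem IsGenSet.wordLength_tripleProd_le (hgen : IsGenSet E) (p : M × M × M) :
    wordLength E (tripleProd p) ≤ tnorm E p :=
  (hgen.wordLength_mul_le _ _).trans (Nat.add_le_add_right (hgen.wordLength_mul_le _ _) _)

theorem IsGenSet.isGeodesicTriple_iff (hgen : IsGenSet E) {p : M × M × M} :
    IsGeodesicTriple E p ↔ Geodesic E p.1 p.2.1 ∧ Geodesic E (p.1 * p.2.1) p.2.2 := by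
  have hleft := hgen.wordLength_mul_le p.1 p.2.1
  have hprod := hgen.wordLength_mul_le (p.1 * p.2.1) p.2.2
  simp only [IsGeodesicTriple, tripleProd, tnorm, Geodesic]
  omega

end Triples

namespace IsFactorizationMap

variable {M : Type*} [Monoid M] {E : Set M} {η : M → M × M}

theorem fst_mul_snd (hη : IsFactorizationMap E η) (m : M) : (η m).1 * (η m).2 = m :=
  hη.1 m

theorem snd_mem (hη : IsFactorizationMap E η) {m : M} (hm : m ≠ 1) : (η m).2 ∈ E :=
  hη.2.2.1 m hm

theorem apply_one (hη : IsFactorizationMap E η) : η 1 = (1, 1) :=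
  hη.2.2.2

theorem wordLength_fst_add_snd (hη : IsFactorizationMap E η) (m : M) :
    wordLength E (η m).1 + wordLength E (η m).2 = wordLength E m :=
  (hη.2.1 m).symm

theorem geodesic_apply (hη : IsFactorizationMap E η) (m : M) : Geodesic E (η m).1 (η m).2 := by
  rw [Geodesic, hη.fst_mul_snd, hη.wordLength_fst_add_snd]

theorem isStablePair_apply (hη : IsFactorizationMap E η) (m : M) :
    IsStablePair η (η m).1 (η m).2 :=
  congrArg η (hη.fst_mul_snd m)

theorem geodesic_of_isStablePair (hη : IsFactorizationMap E η) {a b : M}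
    (hab : IsStablePair η a b) : Geodesic E a b := by
  simpa only [hab.apply_mul] using hη.geodesic_apply (a * b)

theorem apply_of_mem (hη : IsFactorizationMap E η) (hgen : IsGenSet E) (h1 : (1 : M) ∉ E)
    {e : M} (he : e ∈ E) : η e = (1, e) := by
  have hmem : (η e).2 ∈ E := hη.snd_mem fun h => h1 (h ▸ he)
  have hN := hη.wordLength_fst_add_snd e
  rw [hgen.wordLength_of_mem h1 he, hgen.wordLength_of_mem h1 hmem] at hN
  have hfst : (η e).1 = 1 := hgen.wordLength_eq_zero_iff.1 (by omega)
  have hsnd : (η e).2 = e := by simpa [hfst] using hη.fst_mul_snd e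
  exact Prod.ext hfst hsnd

theorem apply_snd (hη : IsFactorizationMap E η) (hgen : IsGenSet E) (h1 : (1 : M) ∉ E)
    (m : M) : η (η m).2 = (1, (η m).2) := by
  by_cases hm : m = 1
  · simp [hm, hη.apply_one]
  · exact hη.apply_of_mem hgen h1 (hη.snd_mem hm)

theorem geodesic_snd_and_geodesic_fst (hη : IsFactorizationMap E η) (hgen : IsGenSet E)
    {x t : M} (hxt : Geodesic E x t) :
    Geodesic E (η x).2 t ∧ Geodesic E (η x).1 (η ((η x).2 * t)).1 := by
  obtain ⟨hsnd, hfst⟩ := (hgen.geodesic_assoc (η x).1 (η x).2 t).1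
    ⟨hη.geodesic_apply x, by rwa [hη.fst_mul_snd]⟩
  rw [← hη.fst_mul_snd ((η x).2 * t)] at hfst
  exact ⟨hsnd, ((hgen.geodesic_assoc _ _ _).2 ⟨hη.geodesic_apply _, hfst⟩).1⟩

theorem tripleProd_f1 (hη : IsFactorizationMap E η) (p : M × M × M) :
    tripleProd (f1 η p) = tripleProd p := by
  simp [tripleProd, f1, mul_assoc, hη.fst_mul_snd]

theorem tnorm_f1 (hη : IsFactorizationMap E η) (p : M × M × M) :
    tnorm E (f1 η p) = wordLength E p.1 + wordLength E (p.2.1 * p.2.2) := by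
  simp only [tnorm, f1, add_assoc, hη.wordLength_fst_add_snd]

theorem tnorm_f2 (hη : IsFactorizationMap E η) (p : M × M × M) :
    tnorm E (f2 η p) = wordLength E (p.1 * p.2.1) + wordLength E p.2.2 := by
  simp only [tnorm, f2, hη.wordLength_fst_add_snd]

theorem tnorm_f1_le (hη : IsFactorizationMap E η) (hgen : IsGenSet E) (p : M × M × M) :
    tnorm E (f1 η p) ≤ tnorm E p := by
  rw [hη.tnorm_f1, tnorm, add_assoc]
  exact Nat.add_le_add_left (hgen.wordLength_mul_le _ _) _

theorem tnorm_f2_le (hη : IsFactorizationMap E η) (hgen : IsGenSet E) (p : M × M × M) :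
    tnorm E (f2 η p) ≤ tnorm E p := by
  rw [hη.tnorm_f2, tnorm]
  exact Nat.add_le_add_right (hgen.wordLength_mul_le _ _) _

theorem tnorm_f2_f1_f2_le (hη : IsFactorizationMap E η) (hgen : IsGenSet E) (p : M × M × M) :
    tnorm E (f2 η (f1 η (f2 η p))) ≤ tnorm E p :=
  (hη.tnorm_f2_le hgen _).trans <| (hη.tnorm_f1_le hgen _).trans (hη.tnorm_f2_le hgen _)

theorem tnorm_le_tnorm_f1_iff (hη : IsFactorizationMap E η) (hgen : IsGenSet E)
    (p : M × M × M) : tnorm E p ≤ tnorm E (f1 η p) ↔ Geodesic E p.2.1 p.2.2 := by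
  have hle := hgen.wordLength_mul_le p.2.1 p.2.2
  rw [hη.tnorm_f1, tnorm, Geodesic]
  omega

theorem tnorm_le_tnorm_f2_iff (hη : IsFactorizationMap E η) (hgen : IsGenSet E)
    (p : M × M × M) : tnorm E p ≤ tnorm E (f2 η p) ↔ Geodesic E p.1 p.2.1 := by
  have hle := hgen.wordLength_mul_le p.1 p.2.1
  rw [hη.tnorm_f2, tnorm, Geodesic]
  omega

theorem tnorm_le_tnorm_f2_f1_f2_iff (hη : IsFactorizationMap E η) (hgen : IsGenSet E)
    (x y z : M) :
    tnorm E (x, y, z) ≤ tnorm E (f2 η (f1 η (f2 η (x, y, z)))) ↔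
      Geodesic E x y ∧ Geodesic E (η (x * y)).2 z ∧
        Geodesic E (η (x * y)).1 (η ((η (x * y)).2 * z)).1 := by
  have h2 := hη.tnorm_f2_le hgen (x, y, z)
  have h12 := hη.tnorm_f1_le hgen (f2 η (x, y, z))
  have h212 := hη.tnorm_f2_le hgen (f1 η (f2 η (x, y, z)))
  calc
    _ ↔ tnorm E (x, y, z) ≤ tnorm E (f2 η (x, y, z)) ∧
          tnorm E (f2 η (x, y, z)) ≤ tnorm E (f1 η (f2 η (x, y, z))) ∧
          tnorm E (f1 η (f2 η (x, y, z))) ≤ tnorm E (f2 η (f1 η (f2 η (x, y, z)))) := by omega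
    _ ↔ _ := (hη.tnorm_le_tnorm_f2_iff hgen _).and
          ((hη.tnorm_le_tnorm_f1_iff hgen _).and (hη.tnorm_le_tnorm_f2_iff hgen _))

theorem isGeodesicTriple_f1 (hη : IsFactorizationMap E η) (hgen : IsGenSet E) {p : M × M × M}
    (hp : IsGeodesicTriple E p) : IsGeodesicTriple E (f1 η p) := by
  refine (hgen.wordLength_tripleProd_le _).antisymm ?_
  rw [hη.tripleProd_f1, hp.wordLength_tripleProd]
  exact hη.tnorm_f1_le hgen p

theorem f2_f1_f2_one_of_isStablePair (hη : IsFactorizationMap E η) {m a : M}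
    (hma : IsStablePair η (η m).2 a) :
    f2 η (f1 η (f2 η (1, m, a))) = ((η m).1, (η m).2, a) := by
  simp only [f1, f2, one_mul, hma.apply_mul, hη.fst_mul_snd]

end IsFactorizationMap

namespace IsFactorable

variable {M : Type*} [Monoid M] {E : Set M} {η : M → M × M}

theorem f2_f1_f2_eq_of_tnorm_le (h : IsFactorable E η) {p : M × M × M}
    (hp : tnorm E p ≤ tnorm E (f2 η (f1 η (f2 η p)))) :
    f1 η (f2 η (f1 η (f2 η p))) = f2 η (f1 η (f2 η p)) ∧
      f2 η (f1 η (f2 η p)) = f2 η (f1 η (f2 η (f1 η p))) :=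
  (h.2 p).resolve_right fun hlt => hlt.2.1.not_ge hp

theorem isStablePair_snd (h : IsFactorable E η) (hgen : IsGenSet E) (h1 : (1 : M) ∉ E)
    {m a : M} (hma : IsStablePair η m a) : IsStablePair η (η m).2 a := by
  have ha : η a = (1, a) := by simpa only [hma.apply_mul] using h.1.apply_snd hgen h1 (m * a)
  have hp : tnorm E (m, a, 1) ≤ tnorm E (f2 η (f1 η (f2 η (m, a, 1)))) := by
    rw [h.1.tnorm_le_tnorm_f2_f1_f2_iff hgen, hma.apply_mul, mul_one, ha]
    exact ⟨h.1.geodesic_of_isStablePair hma, geodesic_one_right a, geodesic_one_right m⟩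
  have himage : f2 η (f1 η (f2 η (m, a, 1))) = ((η m).1, (η m).2, a) := by
    simp only [f1, f2, hma.apply_mul, ha, mul_one]
  have hfix := (h.f2_f1_f2_eq_of_tnorm_le hp).1
  rw [himage] at hfix
  exact congrArg Prod.snd hfix

theorem isStablePair_of_isStablePair_snd (h : IsFactorable E η) (hgen : IsGenSet E)
    (h1 : (1 : M) ∉ E) {m a : M} (hma : IsStablePair η (η m).2 a) : IsStablePair η m a := by
  have hp : tnorm E (1, m, a) ≤ tnorm E (f2 η (f1 η (f2 η (1, m, a)))) := by
    rw [h.1.tnorm_le_tnorm_f2_f1_f2_iff hgen, one_mul, hma.apply_mul]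
    exact ⟨geodesic_one_left m, h.1.geodesic_of_isStablePair hma, h.1.geodesic_apply m⟩
  have hstable : IsStablePair η (η (η (m * a)).1).2 (η (m * a)).2 :=
    h.isStablePair_snd hgen h1 (h.1.isStablePair_apply _)
  have heq : ((η m).1, (η m).2, a) =
      ((η (η (m * a)).1).1, (η (η (m * a)).1).2, (η (m * a)).2) :=
    calc
      _ = f2 η (f1 η (f2 η (1, m, a))) := (h.1.f2_f1_f2_one_of_isStablePair hma).symm
      _ = f2 η (f1 η (f2 η (1, η (m * a)))) := (h.f2_f1_f2_eq_of_tnorm_le hp).2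
      _ = _ := h.1.f2_f1_f2_one_of_isStablePair hstable
  simp only [Prod.mk.injEq] at heq
  obtain ⟨hfst, hsnd, ha⟩ := heq
  have hm : (η (m * a)).1 = m := by
    rw [← h.1.fst_mul_snd (η (m * a)).1, ← hfst, ← hsnd, h.1.fst_mul_snd]
  exact Prod.ext hm ha.symm

theorem recognitionPrinciple (h : IsFactorable E η) (hgen : IsGenSet E) (h1 : (1 : M) ∉ E) :
    RecognitionPrinciple E η := fun _ _ _ =>
  ⟨h.isStablePair_snd hgen h1, h.isStablePair_of_isStablePair_snd hgen h1⟩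

theorem isStablePair_fst_mul (h : IsFactorable E η) (hgen : IsGenSet E) (h1 : (1 : M) ∉ E)
    {x t : M} (hsnd : Geodesic E (η x).2 t)
    (hfst : Geodesic E (η x).1 (η ((η x).2 * t)).1) :
    IsStablePair η ((η x).1 * (η ((η x).2 * t)).1) (η ((η x).2 * t)).2 := by
  have hp := (h.1.tnorm_le_tnorm_f2_f1_f2_iff hgen (η x).1 (η x).2 t).2
    ⟨h.1.geodesic_apply x, by rwa [h.1.fst_mul_snd], by rwa [h.1.fst_mul_snd]⟩
  have hfix := (h.f2_f1_f2_eq_of_tnorm_le hp).1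
  simp only [f1, f2, h.1.fst_mul_snd] at hfix
  exact h.isStablePair_of_isStablePair_snd hgen h1 (congrArg Prod.snd hfix)

theorem isWeaklyFactorable (h : IsFactorable E η) (hgen : IsGenSet E) (h1 : (1 : M) ∉ E) :
    IsWeaklyFactorable E η := by
  refine ⟨h.1, fun x t _ hsnd hfst => ?_⟩
  have hstable := h.isStablePair_fst_mul hgen h1 hsnd hfst
  have hgeod : Geodesic E (η x).1 ((η x).2 * t) := by
    simpa only [h.1.fst_mul_snd] using
      ((hgen.geodesic_assoc _ _ _).1 ⟨hfst, h.1.geodesic_of_isStablePair hstable⟩).2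
  have hxt : Geodesic E x t := by
    simpa only [h.1.fst_mul_snd] using ((hgen.geodesic_assoc _ _ _).2 ⟨hsnd, hgeod⟩).2
  have hηxt : η (x * t) = ((η x).1 * (η ((η x).2 * t)).1, (η ((η x).2 * t)).2) := by
    rwa [IsStablePair, mul_assoc, h.1.fst_mul_snd, ← mul_assoc, h.1.fst_mul_snd] at hstable
  exact ⟨hxt, by rw [hηxt], by rw [hηxt]⟩

end IsFactorable

theorem RecognitionPrinciple.f1_normalTriple {M : Type*} [Monoid M] {E : Set M}
    {η : M → M × M} (hrec : RecognitionPrinciple E η) (hη : IsFactorizationMap E η) (m : M) :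
    f1 η (normalTriple η m) = normalTriple η m := by
  by_cases hm : m = 1
  · simp [hm, f1, normalTriple, hη.apply_one]
  · have hstable : IsStablePair η (η (η m).1).2 (η m).2 :=
      (hrec _ _ (hη.snd_mem hm)).1 (hη.isStablePair_apply m)
    exact congrArg (Prod.mk _) hstable

namespace IsWeaklyFactorable

variable {M : Type*} [Monoid M] {E : Set M} {η : M → M × M}

theorem geodesic_and_apply_mul_of_mem (h : IsWeaklyFactorable E η) {x d e t : M} (ht : t ∈ E)
    (hx : η x = (d, e)) (hsnd : Geodesic E e t) (hfst : Geodesic E d (η (e * t)).1) :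
    Geodesic E x t ∧ η (x * t) = (d * (η (e * t)).1, (η (e * t)).2) := by
  obtain ⟨hxt, hηsnd, hηfst⟩ := h.2 x t ht (by rwa [hx]) (by rwa [hx])
  rw [hx] at hηsnd hηfst
  exact ⟨hxt, Prod.ext hηfst hηsnd⟩

theorem geodesic_and_apply_mul (h : IsWeaklyFactorable E η) (hgen : IsGenSet E) (h1 : (1 : M) ∉ E)
    {x t : M} (hsnd : Geodesic E (η x).2 t) (hfst : Geodesic E (η x).1 (η ((η x).2 * t)).1) :
    Geodesic E x t ∧ η (x * t) = ((η x).1 * (η ((η x).2 * t)).1, (η ((η x).2 * t)).2) := by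
  induction t using hgen.geodesic_induction with
  | one => exact ⟨geodesic_one_right x, by simp [h.1.apply_snd hgen h1]⟩
  | mul r s hs hrs ih =>
    -- In the names below `η x = (d, e)`, `η (e * r) = (g, u)` and `η̄ (u * s) = k`.
    obtain ⟨her, hers⟩ := (hgen.geodesic_assoc _ _ _).2 ⟨hrs, hsnd⟩
    obtain ⟨hus, hgk⟩ := h.1.geodesic_snd_and_geodesic_fst hgen hers
    have hηers := (h.geodesic_and_apply_mul_of_mem hs rfl hus hgk).2
    rw [← mul_assoc, hηers] at hfst
    obtain ⟨hdg, hdgk⟩ := (hgen.geodesic_assoc _ _ _).2 ⟨hgk, hfst⟩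
    obtain ⟨hxr, hηxr⟩ := ih her hdg
    obtain ⟨hxrs, hηxrs⟩ := h.geodesic_and_apply_mul_of_mem hs hηxr hus hdgk
    exact ⟨((hgen.geodesic_assoc _ _ _).1 ⟨hxr, hxrs⟩).2,
      by rw [← mul_assoc, hηxrs, ← mul_assoc (η x).2, hηers, mul_assoc]⟩

theorem f2_f1_f2_eq_normalTriple (h : IsWeaklyFactorable E η) (hgen : IsGenSet E)
    (h1 : (1 : M) ∉ E) {p : M × M × M} (hp : IsGeodesicTriple E p) :
    f2 η (f1 η (f2 η p)) = normalTriple η (tripleProd p) := by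
  obtain ⟨hsnd, hfst⟩ :=
    h.1.geodesic_snd_and_geodesic_fst hgen (hgen.isGeodesicTriple_iff.1 hp).2
  simp only [f1, f2, normalTriple, tripleProd, (h.geodesic_and_apply_mul hgen h1 hsnd hfst).2]

theorem isGeodesicTriple_of_tnorm_le (h : IsWeaklyFactorable E η) (hgen : IsGenSet E)
    (h1 : (1 : M) ∉ E) {p : M × M × M} (hp : tnorm E p ≤ tnorm E (f2 η (f1 η (f2 η p)))) :
    IsGeodesicTriple E p := by
  obtain ⟨hxy, hsnd, hfst⟩ := (h.1.tnorm_le_tnorm_f2_f1_f2_iff hgen _ _ _).1 hp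
  exact hgen.isGeodesicTriple_iff.2 ⟨hxy, (h.geodesic_and_apply_mul hgen h1 hsnd hfst).1⟩

theorem tnorm_f2_f1_f2_f1_lt (h : IsWeaklyFactorable E η) (hgen : IsGenSet E)
    (h1 : (1 : M) ∉ E) {p : M × M × M} (hp : ¬IsGeodesicTriple E p) :
    tnorm E (f2 η (f1 η (f2 η (f1 η p)))) < tnorm E p := by
  by_cases hp1 : IsGeodesicTriple E (f1 η p)
  · calc
      _ ≤ tnorm E (f1 η p) := h.1.tnorm_f2_f1_f2_le hgen _
      _ = wordLength E (tripleProd p) := by rw [← hp1.wordLength_tripleProd, h.1.tripleProd_f1]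
      _ < tnorm E p := (hgen.wordLength_tripleProd_le p).lt_of_ne hp
  · calc
      _ < tnorm E (f1 η p) := lt_of_not_ge (mt (h.isGeodesicTriple_of_tnorm_le hgen h1) hp1)
      _ ≤ tnorm E p := h.1.tnorm_f1_le hgen p

theorem isFactorable (h : IsWeaklyFactorable E η) (hgen : IsGenSet E) (h1 : (1 : M) ∉ E)
    (hrec : RecognitionPrinciple E η) : IsFactorable E η := by
  refine ⟨h.1, fun p => ?_⟩
  by_cases hp : IsGeodesicTriple E p
  · left
    have hp1 : IsGeodesicTriple E (f1 η p) := h.1.isGeodesicTriple_f1 hgen hp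
    rw [h.f2_f1_f2_eq_normalTriple hgen h1 hp, h.f2_f1_f2_eq_normalTriple hgen h1 hp1,
      h.1.tripleProd_f1]
    exact ⟨hrec.f1_normalTriple h.1 _, rfl⟩
  · right
    have hlt : tnorm E (f2 η (f1 η (f2 η p))) < tnorm E p :=
      lt_of_not_ge (mt (h.isGeodesicTriple_of_tnorm_le hgen h1) hp)
    exact ⟨(h.1.tnorm_f1_le hgen _).trans_lt hlt, hlt, h.tnorm_f2_f1_f2_f1_lt hgen h1 hp⟩

end IsWeaklyFactorable

/-- Let `M` be a monoid, `E ⊆ M∖{1}` a generating set and `η` a factorization map on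
`(M, E)`. Then `η` is a factorability structure on `(M, E)` if and only if `η` is a weak
factorability structure satisfying the recognition principle. -/
theorem factorable_iff_weaklyFactorable_and_recognition
    {M : Type*} [Monoid M] (E : Set M) (h1 : (1 : M) ∉ E) (hgen : IsGenSet E)
    (η : M → M × M) (hη : IsFactorizationMap E η) :
    IsFactorable E η ↔ (IsWeaklyFactorable E η ∧ RecognitionPrinciple E η) := by
  constructor
  · intro h
    exact ⟨h.isWeaklyFactorable hgen h1, h.recognitionPrinciple hgen h1⟩
  · rintro ⟨hweak, hrec⟩
    exact hweak.isFactorable hgen h1 hrec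
end

section
/- For every n ≥ 1 the following holds (statement A(n)): let X ∈ F_{n−2} and let I = 1·sh₁(X)·n ∈ F_n (so the letters 1 and n do not occur in sh₁(X)), and suppose the word I₁ⁿ = 1·2⋯n is a (possibly non-connected) subsequence of I. Then there exist J, K ∈ F_{n−2} such that I ∼ sh₂(J)·I₁ⁿ·sh₁(K), i.e., the two words represent the same element of Q_n'. -/
/-- `w` is a word of the free monoid `F_n` on the letters `{1, …, n}`. -/
def InF (n : ℕ) (w : List ℕ) : Prop := ∀ a ∈ w, 1 ≤ a ∧ a ≤ n

/-- The congruence on a free monoid of words generated by a relation `r`. -/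
inductive CongClosure (r : List ℕ → List ℕ → Prop) : List ℕ → List ℕ → Prop
  | rel (u v : List ℕ) {x y : List ℕ} : r x y → CongClosure r (u ++ x ++ v) (u ++ y ++ v)
  | refl (x : List ℕ) : CongClosure r x x
  | symm {x y : List ℕ} : CongClosure r x y → CongClosure r y x
  | trans {x y z : List ℕ} : CongClosure r x y → CongClosure r y z → CongClosure r x z

/-- The defining relations of `P_n`: `ab = ba` for `|a − b| ≥ 2`, and `aa = a`. -/
inductive PRel (n : ℕ) : List ℕ → List ℕ → Prop
  | comm (a b : ℕ) : 1 ≤ a → a ≤ n → 1 ≤ b → b ≤ n → (a + 2 ≤ b ∨ b + 2 ≤ a) →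
      PRel n [a, b] [b, a]
  | idem (a : ℕ) : 1 ≤ a → a ≤ n → PRel n [a, a] [a]

/-- The congruence `∼_P` on `F_n`. -/
def PCong (n : ℕ) : List ℕ → List ℕ → Prop := CongClosure (PRel n)

/-- The defining relations of `Q_n`: those of `P_n` together with
`k(k+1)k(k+1) = (k+1)k(k+1)` and `(k+1)k(k+1)k = (k+1)k(k+1)`. -/
inductive QRel (n : ℕ) : List ℕ → List ℕ → Prop
  | ofP {x y : List ℕ} : PRel n x y → QRel n x y
  | braid1 (k : ℕ) : 1 ≤ k → k + 1 ≤ n → QRel n [k, k + 1, k, k + 1] [k + 1, k, k + 1]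
  | braid2 (k : ℕ) : 1 ≤ k → k + 1 ≤ n → QRel n [k + 1, k, k + 1, k] [k + 1, k, k + 1]

/-- The congruence `∼_Q` on `F_n`. -/
def QCong (n : ℕ) : List ℕ → List ℕ → Prop := CongClosure (QRel n)

/-- The defining relations of `Q_n'`: those of `Q_n` together with the pairs `(kJ, J)`
for which there exists `I ∈ F_n` with `kIJ ∼_Q IJ`, `kI ∼_P Ik` and `k` not occurring
in `I`. -/
inductive RRel (n : ℕ) : List ℕ → List ℕ → Prop
  | ofQ {x y : List ℕ} : QRel n x y → RRel n x y
  | absorb (k : ℕ) (I J : List ℕ) : 1 ≤ k → k ≤ n → InF n I → InF n J →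
      QCong n ((k :: I) ++ J) (I ++ J) → PCong n (k :: I) (I ++ [k]) → k ∉ I →
      RRel n (k :: J) J

/-- The congruence `∼` on `F_n`; the quotient monoid `F_n/∼` is `Q_n'`. -/
def RCong (n : ℕ) : List ℕ → List ℕ → Prop := CongClosure (RRel n)

/-- The shift homomorphism `sh_k : F_{n−k} → F_n`, `i ↦ i + k`. -/
def sh (k : ℕ) (w : List ℕ) : List ℕ := w.map (· + k)

/-- The word `I_a^b = a·(a+1)⋯b`. -/
def Iseg (a b : ℕ) : List ℕ := List.range' a (b + 1 - a)

/-!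
In `Q_n'`, every `a·w` with `w` a word in `a+1, …, t` equals some `J·I_a^m·K`, where `a+1, …, m`
are the letters found by reading `(a+1)·(a+2)⋯` greedily off `w`. Multiply by the letters of `w` one
at a time: a letter `c < m` joins `K`, the letter `m+1` commutes with `K` and extends `I_a^m`, and a
letter `c > m+1` commutes with `I_a^m·K` and joins `J`. The case `c = m` is by induction on `t - a`.

* If `K·m` contains `(a+1)⋯m` as a subsequence, then the letter `a+1` of `I_a^m·K·m` can be deleted.
  Indeed, with `Z` a word in `a+3, …, m` that absorbs each of these letters on the right,
  `Z·(a+2)⋯m·K·m ∼_Q Z·(a+2)⋯m·(a+1)⋯m`, which absorbs `a+1` on the left; as `a+1` commutes with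
  `Z`, the additional relation of `Q_n'` applies. This leaves `(a+2)⋯m·(a·K)·m`, and the induction
  hypothesis applies to `a·K`.
* Otherwise `K ∼_P u·v`, where `u` avoids `a+1` and `v` commutes with `m`, and the induction
  hypothesis applies to `(a+1)⋯m·u·m`.
-/

namespace CongClosure

variable {r : List ℕ → List ℕ → Prop}

theorem context (u v : List ℕ) {x y : List ℕ} (h : CongClosure r x y) :
    CongClosure r (u ++ x ++ v) (u ++ y ++ v) := by
  induction h with
  | rel u' v' h => simpa using CongClosure.rel (u ++ u') (v' ++ v) h
  | refl x => exact .refl _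
  | symm _ ih => exact ih.symm
  | trans _ _ ih₁ ih₂ => exact ih₁.trans ih₂

/-- `CongClosure r` as a congruence of the free monoid; its quotients are the monoids `P_n`, `Q_n`
and `Q_n'`, except that letters outside `{1, …, n}` are kept and satisfy no relation. -/
def con (r : List ℕ → List ℕ → Prop) : Con (FreeMonoid ℕ) where
  r x y := CongClosure r x.toList y.toList
  iseqv := ⟨fun _ => .refl _, .symm, .trans⟩
  mul' {w x y z} hwx hyz := by
    have left := hwx.context [] y.toList
    have right := hyz.context x.toList []
    simp only [List.nil_append, List.append_nil] at left right
    exact left.trans right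

/-- The class of a word in the quotient of the free monoid by `CongClosure r`. -/
def mk (r : List ℕ → List ℕ → Prop) (w : List ℕ) : (con r).Quotient :=
  (FreeMonoid.ofList w : (con r).Quotient)

theorem mk_eq_mk {u v : List ℕ} : mk r u = mk r v ↔ CongClosure r u v :=
  (con r).eq

theorem mk_nil : mk r [] = 1 := rfl

theorem mk_append (u v : List ℕ) : mk r (u ++ v) = mk r u * mk r v := rfl

theorem mk_cons (c : ℕ) (w : List ℕ) : mk r (c :: w) = mk r [c] * mk r w := rfl

theorem mk_eq_of_rel {u v : List ℕ} (h : r u v) : mk r u = mk r v :=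
  mk_eq_mk.2 (by simpa using CongClosure.rel [] [] h)

end CongClosure

open CongClosure (con mk mk_nil mk_append mk_cons mk_eq_mk mk_eq_of_rel)

theorem PRel.le_QRel (n : ℕ) : PRel n ≤ QRel n := fun _ _ => .ofP

theorem PRel.le_RRel (n : ℕ) : PRel n ≤ RRel n := fun _ _ h => .ofQ (.ofP h)

/-- `w` is a word in the letters `a, …, b`; thus `InF n` is `WordIn 1 n`. -/
def WordIn (a b : ℕ) (w : List ℕ) : Prop := ∀ x ∈ w, a ≤ x ∧ x ≤ b

namespace WordIn

variable {a b a' b' c : ℕ} {u v w : List ℕ}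

theorem mono (hw : WordIn a b w) (ha : a' ≤ a) (hb : b ≤ b') : WordIn a' b' w :=
  fun x hx => ⟨ha.trans (hw x hx).1, (hw x hx).2.trans hb⟩

theorem nil (a b : ℕ) : WordIn a b [] := by simp [WordIn]

theorem singleton (ha : a ≤ c) (hb : c ≤ b) : WordIn a b [c] := by simp [WordIn, ha, hb]

theorem append_iff : WordIn a b (u ++ v) ↔ WordIn a b u ∧ WordIn a b v :=
  List.forall_mem_append

theorem append (hu : WordIn a b u) (hv : WordIn a b v) : WordIn a b (u ++ v) :=
  append_iff.2 ⟨hu, hv⟩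

theorem concat_iff : WordIn a b (w ++ [c]) ↔ WordIn a b w ∧ a ≤ c ∧ c ≤ b := by
  rw [append_iff, and_congr_right_iff]
  exact fun _ => List.forall_mem_singleton

end WordIn

theorem wordIn_sh {n : ℕ} {w : List ℕ} (k : ℕ) (hw : InF n w) :
    WordIn (k + 1) (n + k) (sh k w) := by
  intro x hx
  obtain ⟨y, hy, rfl⟩ := List.mem_map.1 hx
  have := hw y hy
  omega

theorem exists_sh_eq {k n : ℕ} {w : List ℕ} (hw : WordIn (k + 1) (n + k) w) :
    ∃ u : List ℕ, InF n u ∧ sh k u = w := by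
  refine ⟨w.map (· - k), ?_, ?_⟩
  · intro x hx
    obtain ⟨y, hy, rfl⟩ := List.mem_map.1 hx
    have := hw y hy
    omega
  · rw [sh, List.map_map]
    exact (List.map_congr_left fun x hx => Nat.sub_add_cancel
      ((Nat.le_succ k).trans (hw x hx).1)).trans (List.map_id w)

theorem wordIn_Iseg (a b : ℕ) : WordIn a b (Iseg a b) := by
  intro x hx
  rw [Iseg, List.mem_range'_1] at hx
  omega

theorem Iseg_eq_nil {a b : ℕ} (h : b < a) : Iseg a b = [] := by
  rw [Iseg, Nat.sub_eq_zero_of_le h, List.range'_zero]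

theorem Iseg_eq_cons {a b : ℕ} (h : a ≤ b) : Iseg a b = a :: Iseg (a + 1) b := by
  rw [Iseg, Iseg, Nat.succ_sub h, List.range'_succ, Nat.succ_sub_succ]

theorem Iseg_succ_right {a b : ℕ} (h : a ≤ b + 1) :
    Iseg a (b + 1) = Iseg a b ++ [b + 1] := by
  rw [Iseg, Iseg, Nat.succ_sub h, List.range'_concat, one_mul, Nat.add_sub_cancel' h]

theorem mk_Iseg_eq_mul (r : List ℕ → List ℕ → Prop) {a b : ℕ} (h : a ≤ b) :
    mk r (Iseg a b) = mk r [a] * mk r (Iseg (a + 1) b) := by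
  rw [Iseg_eq_cons h, mk_cons]

theorem mk_Iseg_succ_right (r : List ℕ → List ℕ → Prop) {a b : ℕ} (h : a ≤ b + 1) :
    mk r (Iseg a (b + 1)) = mk r (Iseg a b) * mk r [b + 1] := by
  rw [Iseg_succ_right h, mk_append]

section Commutation

variable {n a b c : ℕ} {r : List ℕ → List ℕ → Prop} {w : List ℕ}

theorem commute_mk_of_far (hr : PRel n ≤ r) (hc : 1 ≤ c ∧ c ≤ n) (hw : InF n w)
    (hfar : ∀ x ∈ w, c + 2 ≤ x ∨ x + 2 ≤ c) : Commute (mk r [c]) (mk r w) := by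
  induction w with
  | nil => exact Commute.one_right _
  | cons x w ih =>
    rw [InF, List.forall_mem_cons] at hw
    rw [List.forall_mem_cons] at hfar
    have swap : Commute (mk r [c]) (mk r [x]) :=
      mk_eq_of_rel (hr _ _ (.comm c x hc.1 hc.2 hw.1.1 hw.1.2 hfar.1))
    exact swap.mul_right (ih hw.2 hfar.2)

theorem commute_mk_of_above (hr : PRel n ≤ r) (hc : 1 ≤ c) (hcn : c ≤ n)
    (hw : WordIn (c + 2) n w) : Commute (mk r [c]) (mk r w) :=
  commute_mk_of_far hr ⟨hc, hcn⟩ (hw.mono (by omega) le_rfl) fun x hx => .inl (hw x hx).1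

theorem commute_mk_of_below (hr : PRel n ≤ r) (hcn : c ≤ n) (hbc : b + 2 ≤ c)
    (hw : WordIn 1 b w) : Commute (mk r [c]) (mk r w) :=
  commute_mk_of_far hr ⟨by omega, hcn⟩ (hw.mono le_rfl (by omega)) fun x hx =>
    .inr (by have := (hw x hx).2; omega)

end Commutation

/-- The largest `m` for which the greedy reading of `w` finds `(a+1)⋯m` as a subsequence. -/
def climb (a : ℕ) (w : List ℕ) : ℕ := w.foldl (fun m c => if c = m + 1 then m + 1 else m) a

section Climb

variable {a m c : ℕ} {w : List ℕ}

theorem climb_concat (a : ℕ) (w : List ℕ) (c : ℕ) :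
    climb a (w ++ [c]) = if c = climb a w + 1 then climb a w + 1 else climb a w :=
  List.foldl_concat ..

theorem climb_le_climb_concat (a : ℕ) (w : List ℕ) (c : ℕ) :
    climb a w ≤ climb a (w ++ [c]) := by
  rw [climb_concat]
  split <;> omega

theorem le_climb (a : ℕ) (w : List ℕ) : a ≤ climb a w := by
  induction w using List.reverseRecOn with
  | nil => exact le_rfl
  | append_singleton w c ih => exact ih.trans (climb_le_climb_concat a w c)

theorem climb_le {b : ℕ} (ham : a ≤ m) (hw : WordIn b m w) : climb a w ≤ m := by
  induction w using List.reverseRecOn with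
  | nil => exact ham
  | append_singleton w c ih =>
    obtain ⟨hw, -, hcm⟩ := WordIn.concat_iff.1 hw
    have := ih hw
    rw [climb_concat]
    split <;> omega

theorem le_climb_of_sublist (h : (Iseg (a + 1) m).Sublist w) : m ≤ climb a w := by
  induction w using List.reverseRecOn generalizing m with
  | nil =>
    refine le_of_not_gt fun ham => ?_
    rw [Iseg_eq_cons (show a + 1 ≤ m from ham)] at h
    exact List.cons_ne_nil _ _ (List.sublist_nil.1 h)
  | append_singleton w c ih =>
    obtain hma | ham := le_or_gt m a
    · exact hma.trans (le_climb a _)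
    obtain ⟨k, rfl⟩ : ∃ k, m = k + 1 := ⟨m - 1, by omega⟩
    obtain ⟨u, v, huv, hu, hv⟩ := List.sublist_append_iff.1 h
    obtain rfl | rfl := List.sublist_singleton.1 hv
    · rw [List.append_nil] at huv
      exact (ih (huv ▸ hu)).trans (climb_le_climb_concat a w c)
    · rw [Iseg_succ_right (by omega)] at huv
      obtain ⟨rfl, hc⟩ := List.append_inj' huv rfl
      obtain rfl : k + 1 = c := List.singleton_inj.1 hc
      have := ih hu
      rw [climb_concat]
      split <;> omega

theorem climb_eq_of_sublist {b : ℕ} (ham : a ≤ m) (hw : WordIn b m w)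
    (h : (Iseg (a + 1) m).Sublist w) : climb a w = m :=
  le_antisymm (climb_le ham hw) (le_climb_of_sublist h)

end Climb

section Absorption

theorem mul_mul_mul_eq_of_right_absorb {M : Type*} [Monoid M] {s x y : M} (hs : s * y = s)
    (hyx : y * x * y * x = y * x * y) : s * x * y * x = s * x * y :=
  calc s * x * y * x = s * (y * x * y * x) := by rw [← mul_assoc, ← mul_assoc, ← mul_assoc, hs]
    _ = s * x * y := by rw [hyx, ← mul_assoc, ← mul_assoc, hs]

theorem mul_mul_mul_eq_of_left_absorb {M : Type*} [Monoid M] {s x y : M} (hs : y * s = s)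
    (hxy : x * y * x * y = y * x * y) : x * (y * x * s) = y * x * s :=
  calc x * (y * x * s) = x * y * x * y * s := by simp only [mul_assoc, hs]
    _ = y * x * s := by rw [hxy, mul_assoc, hs]

variable {n m a : ℕ}

theorem letter_mul_self {c : ℕ} (hc : 1 ≤ c) (hcn : c ≤ n) :
    mk (QRel n) [c] * mk (QRel n) [c] = mk (QRel n) [c] :=
  mk_eq_of_rel (.ofP (.idem c hc hcn))

/-- Right multiplication by any of the letters `b, …, m` fixes the element `z` of `Q_n`. -/
def RightAbsorbs (n b m : ℕ) (z : (con (QRel n)).Quotient) : Prop :=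
  ∀ c, b ≤ c → c ≤ m → z * mk (QRel n) [c] = z

theorem RightAbsorbs.mul_Iseg_mul_letter (hm : m ≤ n) {z : (con (QRel n)).Quotient}
    (hz : RightAbsorbs n (a + 2) m z) {j c : ℕ} (haj : a ≤ j) (hjm : j ≤ m)
    (hac : a + 1 ≤ c) (hcm : c ≤ m) (hcj : c ≠ j + 1) :
    z * mk (QRel n) (Iseg (a + 1) j) * mk (QRel n) [c] = z * mk (QRel n) (Iseg (a + 1) j) := by
  induction j using Nat.strong_induction_on generalizing c with
  | _ j ih =>
  obtain rfl | haj := haj.eq_or_lt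
  · rw [Iseg_eq_nil (Nat.lt_succ_self a), mk_nil, mul_one]
    exact hz c (by omega) hcm
  obtain ⟨i, rfl⟩ : ∃ i, j = i + 1 := ⟨j - 1, by omega⟩
  rw [Iseg_succ_right (by omega), mk_append, ← mul_assoc]
  obtain rfl | hci := eq_or_ne c (i + 1)
  · rw [mul_assoc, letter_mul_self (by omega) (by omega)]
  obtain rfl | hci' := eq_or_ne c i
  · obtain ⟨k, rfl⟩ : ∃ k, c = k + 1 := ⟨c - 1, by omega⟩
    rw [Iseg_succ_right (by omega), mk_append, ← mul_assoc]
    have absorb := ih k (by omega) (by omega) (by omega) (c := k + 2) (by omega) hjm (by omega)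
    exact mul_mul_mul_eq_of_right_absorb absorb
      (mk_eq_of_rel (.braid2 (k + 1) (by omega) (by omega)))
  · have swap : mk (QRel n) [i + 1] * mk (QRel n) [c] = mk (QRel n) [c] * mk (QRel n) [i + 1] :=
      mk_eq_of_rel (.ofP (.comm _ _ (by omega) (by omega) (by omega) (by omega) (by omega)))
    rw [mul_assoc, swap, ← mul_assoc, ih i (by omega) (by omega) (by omega) hac hcm (by omega)]

theorem RightAbsorbs.mul_Iseg (hm : m ≤ n) (ham : a ≤ m) {z : (con (QRel n)).Quotient}
    (hz : RightAbsorbs n (a + 2) m z) :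
    RightAbsorbs n (a + 1) m (z * mk (QRel n) (Iseg (a + 1) m)) :=
  fun _ hac hcm => hz.mul_Iseg_mul_letter hm ham le_rfl hac hcm (by omega)

theorem RightAbsorbs.mul_mk (hm : m ≤ n) (ham : a ≤ m) {z : (con (QRel n)).Quotient}
    (hz : RightAbsorbs n (a + 2) m z) {w : List ℕ} (hw : WordIn (a + 1) m w) :
    z * mk (QRel n) w = z * mk (QRel n) (Iseg (a + 1) (climb a w)) := by
  induction w using List.reverseRecOn with
  | nil => rw [climb, List.foldl_nil, Iseg_eq_nil (Nat.lt_succ_self a)]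
  | append_singleton w c ih =>
    obtain ⟨hw, hac, hcm⟩ := WordIn.concat_iff.1 hw
    have hle := le_climb a w
    rw [mk_append, ← mul_assoc, ih hw, climb_concat]
    split_ifs with hc
    · rw [Iseg_succ_right (by omega), mk_append, mul_assoc, hc]
    · exact hz.mul_Iseg_mul_letter hm hle (climb_le ham hw) hac hcm hc

theorem exists_rightAbsorbs (hm : m ≤ n) (a : ℕ) :
    ∃ Z : List ℕ, WordIn (a + 1) m Z ∧ RightAbsorbs n (a + 1) m (mk (QRel n) Z) := by
  induction h : m - a generalizing a with
  | zero => exact ⟨[], .nil _ _, fun c _ _ => by omega⟩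
  | succ d ih =>
    obtain ⟨Z, hmem, hZ⟩ := ih (a + 1) (by omega)
    exact ⟨Z ++ Iseg (a + 1) m, (hmem.mono (Nat.le_succ _) le_rfl).append (wordIn_Iseg _ _),
      hZ.mul_Iseg hm (by omega)⟩

theorem letter_mul_mk_Iseg_append_Iseg (hm : m ≤ n) (ha : 1 ≤ a) (ham : a ≤ m) :
    mk (QRel n) [a] * mk (QRel n) (Iseg (a + 1) m ++ Iseg a m) =
      mk (QRel n) (Iseg (a + 1) m ++ Iseg a m) := by
  induction h : m - a generalizing a with
  | zero =>
    obtain rfl : a = m := by omega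
    rw [Iseg_eq_cons le_rfl, Iseg_eq_nil (Nat.lt_succ_self a)]
    exact letter_mul_self ha hm
  | succ d ih =>
    have inner := ih (a := a + 1) (by omega) (by omega) (by omega)
    have move : Commute (mk (QRel n) [a]) (mk (QRel n) (Iseg (a + 2) m)) :=
      commute_mk_of_above (PRel.le_QRel n) ha (by omega) ((wordIn_Iseg _ _).mono le_rfl hm)
    have factor :=
      calc mk (QRel n) (Iseg (a + 1) m ++ Iseg a m)
        _ = mk (QRel n) [a + 1] * mk (QRel n) (Iseg (a + 2) m) *
              (mk (QRel n) [a] * mk (QRel n) (Iseg (a + 1) m)) :=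
          congrArg₂ (· * ·) (mk_Iseg_eq_mul _ (by omega)) (mk_Iseg_eq_mul _ ham)
        _ = mk (QRel n) [a + 1] * mk (QRel n) [a] *
              mk (QRel n) (Iseg (a + 2) m ++ Iseg (a + 1) m) :=
          move.symm.mul_mul_mul_comm _ _
    rw [factor]
    exact mul_mul_mul_eq_of_left_absorb inner (mk_eq_of_rel (.braid1 a ha (by omega)))

theorem letter_mul_mk_of_far_absorber {k : ℕ} {I J : List ℕ} (hk : 1 ≤ k) (hkn : k ≤ n)
    (hI : WordIn (k + 2) n I) (hJ : InF n J)
    (h : mk (QRel n) [k] * (mk (QRel n) I * mk (QRel n) J) = mk (QRel n) I * mk (QRel n) J) :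
    mk (RRel n) [k] * mk (RRel n) J = mk (RRel n) J := by
  have comm : PCong n (k :: I) (I ++ [k]) :=
    mk_eq_mk.1 (commute_mk_of_above le_rfl hk hkn hI).eq
  have absorb : QCong n ((k :: I) ++ J) (I ++ J) :=
    mk_eq_mk.1 (by rw [mk_append, mk_cons, mul_assoc, h, mk_append])
  have fresh : k ∉ I := fun hkI => by
    have := (hI k hkI).1
    omega
  exact mk_eq_of_rel (.absorb k I J hk hkn (hI.mono (by omega) le_rfl) hJ absorb comm fresh)

theorem letter_mul_mk_Iseg_append_of_climb (hm : m ≤ n) (ham : a + 1 ≤ m) {w : List ℕ}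
    (hw : WordIn (a + 1) m w) (hclimb : climb a w = m) :
    mk (RRel n) [a + 1] * mk (RRel n) (Iseg (a + 2) m ++ w) =
      mk (RRel n) (Iseg (a + 2) m ++ w) := by
  obtain ⟨Z, hZw, hZ⟩ := exists_rightAbsorbs hm (a + 2)
  have hZw : WordIn (a + 1 + 2) n Z := hZw.mono le_rfl hm
  have reduce : mk (QRel n) Z * mk (QRel n) (Iseg (a + 2) m ++ w) =
      mk (QRel n) Z * mk (QRel n) (Iseg (a + 2) m ++ Iseg (a + 1) m) := by
    rw [mk_append, mk_append, ← mul_assoc, ← mul_assoc,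
      (hZ.mul_Iseg hm ham).mul_mk hm (by omega) hw, hclimb]
  have comm : Commute (mk (QRel n) [a + 1]) (mk (QRel n) Z) :=
    commute_mk_of_above (PRel.le_QRel n) (by omega) (by omega) hZw
  have hword : InF n (Iseg (a + 2) m ++ w) :=
    ((wordIn_Iseg _ _).mono (by omega) hm).append (hw.mono (by omega) hm)
  refine letter_mul_mk_of_far_absorber (by omega) (by omega) hZw hword ?_
  rw [reduce, comm.left_comm, letter_mul_mk_Iseg_append_Iseg hm (by omega) ham]

end Absorption

theorem exists_split_of_climb {n t a : ℕ} {r : List ℕ → List ℕ → Prop} (hr : PRel n ≤ r)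
    (htn : t ≤ n) {w : List ℕ} (hw : WordIn (a + 1) t w) :
    ∃ u v : List ℕ, WordIn (a + 2) t u ∧ WordIn (a + 1) (climb a w) v ∧
      mk r w = mk r u * mk r v := by
  induction w using List.reverseRecOn with
  | nil => exact ⟨[], [], .nil _ _, .nil _ _, rfl⟩
  | append_singleton w c ih =>
    obtain ⟨hw, hac, hct⟩ := WordIn.concat_iff.1 hw
    obtain ⟨u, v, hu, hv, hsplit⟩ := ih hw
    have hle := le_climb a w
    rw [mk_append, hsplit]
    obtain hfar | hnear := le_or_gt (climb a w + 2) c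
    · have move : Commute (mk r [c]) (mk r v) :=
        commute_mk_of_below hr (by omega) hfar (hv.mono (by omega) le_rfl)
      exact ⟨u ++ [c], v, hu.append (.singleton (by omega) hct),
        hv.mono le_rfl (climb_le_climb_concat a w c), by
        rw [mk_append, mul_assoc, mul_assoc, move.eq]⟩
    · have hc : c ≤ climb a (w ++ [c]) := by
        rw [climb_concat]
        split <;> omega
      exact ⟨u, v ++ [c], hu,
        (hv.mono le_rfl (climb_le_climb_concat a w c)).append (.singleton hac hc),
        mul_assoc _ _ _⟩

/-- The element `x` of `Q_n'` is of the form `J·I_a^m·K`, with `J` a word in `a+2, …, t` and `K`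
a word in `a+1, …, m-1`. The theorem is the case `a = 1`, `m = t = n`. -/
def HasForm (n t a m : ℕ) (x : (con (RRel n)).Quotient) : Prop :=
  ∃ J K : List ℕ, WordIn (a + 2) t J ∧ WordIn (a + 1) (m - 1) K ∧
    x = mk (RRel n) J * mk (RRel n) (Iseg a m) * mk (RRel n) K

namespace HasForm

variable {n t a m c : ℕ} {x : (con (RRel n)).Quotient}

theorem mono {s : ℕ} (hx : HasForm n s a m x) (hst : s ≤ t) : HasForm n t a m x := by
  obtain ⟨J, K, hJ, hK, rfl⟩ := hx
  exact ⟨J, K, hJ.mono le_rfl hst, hK, rfl⟩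

theorem mul_left {w : List ℕ} (hw : WordIn (a + 2) t w) (hx : HasForm n t a m x) :
    HasForm n t a m (mk (RRel n) w * x) := by
  obtain ⟨J, K, hJ, hK, rfl⟩ := hx
  exact ⟨w ++ J, K, hw.append hJ, hK, by simp only [mk_append, mul_assoc]⟩

theorem mul_right {w : List ℕ} (hw : WordIn (a + 1) (m - 1) w) (hx : HasForm n t a m x) :
    HasForm n t a m (x * mk (RRel n) w) := by
  obtain ⟨J, K, hJ, hK, rfl⟩ := hx
  exact ⟨J, K ++ w, hJ, hK.append hw, by simp only [mk_append, mul_assoc]⟩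

theorem mul_succ (hx : HasForm n t a m x) (hm : 1 ≤ m) (ham : a ≤ m) (hmn : m + 1 ≤ n) :
    HasForm n t a (m + 1) (x * mk (RRel n) [m + 1]) := by
  obtain ⟨J, K, hJ, hK, rfl⟩ := hx
  have comm : Commute (mk (RRel n) [m + 1]) (mk (RRel n) K) :=
    commute_mk_of_below (PRel.le_RRel n) hmn (by omega) (hK.mono (by omega) le_rfl)
  refine ⟨J, K, hJ, hK.mono le_rfl (by omega), ?_⟩
  rw [mul_assoc, ← comm.eq, mk_Iseg_succ_right _ (by omega)]
  simp only [mul_assoc]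

theorem mul_of_far (hx : HasForm n t a m x) (ha : 1 ≤ a) (ham : a ≤ m) (hmc : m + 2 ≤ c)
    (hct : c ≤ t) (htn : t ≤ n) : HasForm n t a m (x * mk (RRel n) [c]) := by
  obtain ⟨J, K, hJ, hK, rfl⟩ := hx
  have comm : Commute (mk (RRel n) [c]) (mk (RRel n) (Iseg a m ++ K)) :=
    commute_mk_of_below (PRel.le_RRel n) (by omega) hmc
      (((wordIn_Iseg a m).mono ha le_rfl).append (hK.mono (by omega) (by omega)))
  refine ⟨J ++ [c], K, hJ.append (.singleton (by omega) hct), hK, ?_⟩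
  rw [mul_assoc, mul_assoc, ← mul_assoc (mk _ (Iseg a m)), ← mk_append, ← comm.eq]
  simp only [mk_append, mul_assoc]

theorem pred_mul (hx : HasForm n t (a + 1) m x) (ha : 1 ≤ a) (ham : a + 1 ≤ m) (hmn : m ≤ n)
    (htn : t ≤ n) : HasForm n t a m (mk (RRel n) [a] * x) := by
  obtain ⟨J, K, hJ, hK, rfl⟩ := hx
  have hJ : WordIn (a + 2) t J := hJ.mono (by omega) le_rfl
  have comm : Commute (mk (RRel n) [a]) (mk (RRel n) J) :=
    commute_mk_of_above (PRel.le_RRel n) ha (by omega) (hJ.mono le_rfl htn)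
  refine ⟨J, K, hJ, hK.mono (by omega) le_rfl, ?_⟩
  rw [mul_assoc, comm.left_comm, mk_Iseg_eq_mul _ (show a ≤ m by omega)]
  simp only [mul_assoc]

end HasForm

section RepeatedTop

variable {n a m : ℕ} {K : List ℕ}

theorem hasForm_Iseg_mul_top_of_climb_eq (ha : 1 ≤ a) (hmn : m + 1 ≤ n) (hK : WordIn (a + 1) m K)
    (hclimb : climb a K = m)
    (h : HasForm n m a m (mk (RRel n) (a :: K))) :
    HasForm n (m + 1) a (m + 1)
      (mk (RRel n) (Iseg a (m + 1)) * mk (RRel n) K * mk (RRel n) [m + 1]) := by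
  have ham : a ≤ m := hclimb ▸ le_climb a K
  have hT : WordIn (a + 2) (m + 1) (Iseg (a + 2) (m + 1)) := wordIn_Iseg _ _
  have absorb : mk (RRel n) [a + 1] * mk (RRel n) (Iseg (a + 2) (m + 1) ++ (K ++ [m + 1])) =
      mk (RRel n) (Iseg (a + 2) (m + 1) ++ (K ++ [m + 1])) :=
    letter_mul_mk_Iseg_append_of_climb hmn (by omega)
      ((hK.mono le_rfl (by omega)).append (.singleton (by omega) le_rfl))
      (by rw [climb_concat, hclimb, if_pos rfl])
  have comm : Commute (mk (RRel n) [a]) (mk (RRel n) (Iseg (a + 2) (m + 1))) :=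
    commute_mk_of_above (PRel.le_RRel n) ha (by omega) (hT.mono le_rfl hmn)
  have rewritten :=
    calc mk (RRel n) (Iseg a (m + 1)) * mk (RRel n) K * mk (RRel n) [m + 1]
      _ = mk (RRel n) [a] * (mk (RRel n) [a + 1] *
            mk (RRel n) (Iseg (a + 2) (m + 1) ++ (K ++ [m + 1]))) := by
        rw [mk_Iseg_eq_mul _ (show a ≤ m + 1 by omega),
          mk_Iseg_eq_mul _ (show a + 1 ≤ m + 1 by omega)]
        simp only [mk_append, mul_assoc]
      _ = mk (RRel n) (Iseg (a + 2) (m + 1)) *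
            (mk (RRel n) (a :: K) * mk (RRel n) [m + 1]) := by
        rw [absorb, mk_append, comm.left_comm, mk_append, mk_cons a K, mul_assoc]
  rw [rewritten]
  exact ((h.mul_succ (by omega) ham hmn).mono (Nat.le_succ m)).mul_left hT

theorem hasForm_Iseg_mul_top_of_climb_lt (ha : 1 ≤ a) (hmn : m ≤ n) (hK : WordIn (a + 1) m K)
    (hclimb : climb a K + 2 ≤ m)
    (h : ∀ w, WordIn (a + 2) m w → climb (a + 1) w = m →
      HasForm n m (a + 1) m (mk (RRel n) ((a + 1) :: w))) :
    HasForm n m a m (mk (RRel n) (Iseg a m) * mk (RRel n) K * mk (RRel n) [m]) := by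
  have ham : a + 2 ≤ m := (Nat.add_le_add_right (le_climb a K) 2).trans hclimb
  obtain ⟨u, v, hu, hv, hsplit⟩ := exists_split_of_climb (PRel.le_RRel n) hmn hK
  have comm : Commute (mk (RRel n) [m]) (mk (RRel n) v) :=
    commute_mk_of_below (PRel.le_RRel n) hmn hclimb (hv.mono (by omega) le_rfl)
  have hw : WordIn (a + 2) m (Iseg (a + 2) m ++ (u ++ [m])) :=
    (wordIn_Iseg _ _).append (hu.append (.singleton ham le_rfl))
  have hwclimb : climb (a + 1) (Iseg (a + 2) m ++ (u ++ [m])) = m :=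
    climb_eq_of_sublist (by omega) hw (List.sublist_append_left _ _)
  have rewritten : mk (RRel n) (Iseg a m) * mk (RRel n) K * mk (RRel n) [m] =
      mk (RRel n) [a] * mk (RRel n) ((a + 1) :: (Iseg (a + 2) m ++ (u ++ [m]))) *
        mk (RRel n) v := by
    rw [hsplit, mul_assoc, mul_assoc (mk _ u), ← comm.eq,
      mk_Iseg_eq_mul _ (show a ≤ m by omega),
      mk_Iseg_eq_mul _ (show a + 1 ≤ m by omega), mk_cons (a + 1) (Iseg (a + 2) m ++ _)]
    simp only [mk_append, mul_assoc]
  rw [rewritten]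
  exact ((h _ hw hwclimb).pred_mul ha (by omega) hmn hmn).mul_right (hv.mono le_rfl (by omega))

end RepeatedTop

theorem HasForm.mul_top {n t a m : ℕ} {x : (con (RRel n)).Quotient} (hx : HasForm n t a m x)
    (ha : 1 ≤ a) (ham : a + 1 ≤ m) (hmt : m ≤ t) (htn : t ≤ n)
    (ih : ∀ b s w, 1 ≤ b → b ≤ s → s ≤ n → s - b < m - a → WordIn (b + 1) s w →
      HasForm n s b (climb b w) (mk (RRel n) (b :: w))) :
    HasForm n t a m (x * mk (RRel n) [m]) := by
  obtain ⟨J, K, hJ, hK, rfl⟩ := hx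
  have hKm := climb_le (show a ≤ m - 1 by omega) hK
  have repeated : HasForm n m a m (mk (RRel n) (Iseg a m) * mk (RRel n) K * mk (RRel n) [m]) := by
    obtain heq | hlt := hKm.eq_or_lt
    · obtain ⟨k, rfl⟩ : ∃ k, m = k + 1 := ⟨m - 1, by omega⟩
      refine hasForm_Iseg_mul_top_of_climb_eq ha (by omega) hK heq ?_
      rw [Nat.add_sub_cancel] at heq
      simpa only [heq] using ih a k K ha (by omega) (by omega) (by omega) hK
    · refine hasForm_Iseg_mul_top_of_climb_lt ha (by omega) (hK.mono le_rfl (by omega))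
        (by omega) fun w hw hwclimb => ?_
      simpa only [hwclimb] using ih (a + 1) m w (by omega) ham (by omega) (by omega) hw
  simpa only [mul_assoc] using (repeated.mono hmt).mul_left hJ

theorem hasForm_mk_cons {n t a : ℕ} (ha : 1 ≤ a) (hat : a ≤ t) (htn : t ≤ n) {w : List ℕ}
    (hw : WordIn (a + 1) t w) : HasForm n t a (climb a w) (mk (RRel n) (a :: w)) := by
  induction h : t - a using Nat.strong_induction_on generalizing a t w with
  | _ d ih =>
  induction w using List.reverseRecOn with
  | nil =>
    refine ⟨[], [], .nil _ _, .nil _ _, ?_⟩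
    rw [climb, List.foldl_nil, Iseg_eq_cons le_rfl, Iseg_eq_nil (Nat.lt_succ_self a), mk_nil,
      one_mul, mul_one]
  | append_singleton w c ihw =>
    obtain ⟨hw, hac, hct⟩ := WordIn.concat_iff.1 hw
    have hwform := ihw hw
    have ham := le_climb a w
    have hmt := climb_le hat hw
    rw [climb_concat, ← List.cons_append, mk_append]
    split_ifs with hnext
    · rw [hnext]
      exact hwform.mul_succ (by omega) ham (by omega)
    obtain hlt | heq | hgt := lt_trichotomy c (climb a w)
    · exact hwform.mul_right (.singleton hac (by omega))
    · rw [heq]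
      exact hwform.mul_top ha (by omega) hmt htn fun b s v hb hbs hsn hlt hv =>
        ih (s - b) (by omega) hb hbs hsn hv rfl
    · exact hwform.mul_of_far ha ham (by omega) hct htn

theorem statement_A_general {n : ℕ} (hn : 1 ≤ n) {w : List ℕ} (hw : WordIn 2 n w)
    (hsub : (Iseg 1 n).Sublist (1 :: w)) :
    ∃ J K : List ℕ, InF (n - 2) J ∧ InF (n - 2) K ∧
      RCong n (1 :: w) (sh 2 J ++ Iseg 1 n ++ sh 1 K) := by
  have hclimb : climb 1 w = n := by
    rw [Iseg_eq_cons hn] at hsub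
    exact climb_eq_of_sublist hn hw (List.cons_sublist_cons.1 hsub)
  have hform := hasForm_mk_cons le_rfl hn le_rfl hw
  rw [hclimb] at hform
  obtain ⟨J, K, hJ, hK, hcong⟩ := hform
  obtain ⟨J, hJ', rfl⟩ := exists_sh_eq (k := 2) (n := n - 2) (hJ.mono le_rfl (by omega))
  obtain ⟨K, hK', rfl⟩ := exists_sh_eq (k := 1) (n := n - 2) (hK.mono le_rfl (by omega))
  exact ⟨J, K, hJ', hK', mk_eq_mk.1 hcong⟩

/-- Statement A(n): if `X ∈ F_{n−2}` and `I = 1·sh₁(X)·n ∈ F_n` contains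
`I₁ⁿ = 1·2⋯n` as a (possibly non-connected) subsequence, then there are
`J, K ∈ F_{n−2}` with `I ∼ sh₂(J)·I₁ⁿ·sh₁(K)` in `Q_n'`. -/
theorem statement_A (n : ℕ) (hn : 1 ≤ n) (X : List ℕ) (hX : InF (n - 2) X)
    (hsub : List.Sublist (Iseg 1 n) ([1] ++ sh 1 X ++ [n])) :
    ∃ J K : List ℕ, InF (n - 2) J ∧ InF (n - 2) K ∧
      RCong n ([1] ++ sh 1 X ++ [n]) (sh 2 J ++ Iseg 1 n ++ sh 1 K) := by
  obtain rfl | hn := hn.eq_or_lt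
  · obtain rfl : X = [] := List.eq_nil_iff_forall_not_mem.2 fun x hx => by
      have := hX x hx
      omega
    exact ⟨[], [], hX, hX, mk_eq_mk.1 (mk_eq_of_rel (.ofQ (.ofP (.idem 1 le_rfl le_rfl))))⟩
  · exact statement_A_general hn.le
      (((wordIn_sh 1 hX).mono le_rfl (by omega)).append (.singleton hn le_rfl)) hsub
end

section
/- For every n ≥ 1 the following hold: (B(n)) for every Z ∈ F_{n−1}, the words 1·sh₁(Z)·I₁ⁿ and sh₁(Z)·I₁ⁿ are ∼-equivalent, i.e., represent the same element of Q_n'; (C(n)) for every L ∈ F_n, the words L·I₁ⁿ and M·I₁ⁿ are ∼-equivalent, where M is the word obtained from L by deleting all occurrences of the letter 1. -/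
/-!
Write `x_i` for the class of the letter `i` in `Q_n`. If `z` absorbs `x_{k+1}, …, x_n` on the
right, then right multiplication by letters `≥ k` merely moves `z` along the path
`z, z x_k, z x_k x_{k+1}, …, z x_k ⋯ x_n`: the next letter makes one step and every other letter
acts trivially. The end of the path absorbs `x_k` too, so, inductively, for every `k` there is a
word `I` in the letters `≥ k + 2` which absorbs all these letters on the right. For a word `W` in
the letters `> k` this gives `I W = I x_{k+1} ⋯ x_j` for some `j`. As `x_k` commutes with `I`
and fixes `x_{k+1} ⋯ x_j · x_k ⋯ x_n` on the left, it fixes `I W x_k ⋯ x_n`, and the relations of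
`Q_n'` cancel the prefix `I`.
-/

namespace CongClosure

variable {r : List ℕ → List ℕ → Prop} {x y : List ℕ}

theorem of_rel (h : r x y) : CongClosure r x y := by
  simpa using rel [] [] h

theorem append_left (u : List ℕ) (h : CongClosure r x y) : CongClosure r (u ++ x) (u ++ y) := by
  induction h with
  | rel a b h => simpa using rel (u ++ a) b h
  | refl x => exact refl _
  | symm _ ih => exact ih.symm
  | trans _ _ ih₁ ih₂ => exact ih₁.trans ih₂

theorem append_right (v : List ℕ) (h : CongClosure r x y) : CongClosure r (x ++ v) (y ++ v) := by
  induction h with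
  | rel a b h => simpa using rel a (b ++ v) h
  | refl x => exact refl _
  | symm _ ih => exact ih.symm
  | trans _ _ ih₁ ih₂ => exact ih₁.trans ih₂

/-- `CongClosure r` as a bundled congruence, giving access to the quotient monoid. -/
def toCon (r : List ℕ → List ℕ → Prop) : Con (FreeMonoid ℕ) where
  r x y := CongClosure r x.toList y.toList
  iseqv := ⟨fun _ => refl _, symm, trans⟩
  mul' h₁ h₂ := (append_right _ h₁).trans (append_left _ h₂)

/-- The class of a letter in the monoid presented by the relations `r`. -/
def letter (r : List ℕ → List ℕ → Prop) (a : ℕ) : (toCon r).Quotient :=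
  (FreeMonoid.of a : FreeMonoid ℕ)

theorem prod_map_letter (r : List ℕ → List ℕ → Prop) (L : List ℕ) :
    (L.map (letter r)).prod = ((FreeMonoid.ofList L : FreeMonoid ℕ) : (toCon r).Quotient) := by
  induction L with
  | nil => rfl
  | cons a L ih =>
    rw [List.map_cons, List.prod_cons, ih, letter, FreeMonoid.ofList_cons, Con.coe_mul]

theorem prod_map_letter_eq_iff :
    (x.map (letter r)).prod = (y.map (letter r)).prod ↔ CongClosure r x y := by
  rw [prod_map_letter, prod_map_letter, Con.eq]
  rfl

theorem prod_map_letter_eq_of_rel (h : r x y) :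
    (x.map (letter r)).prod = (y.map (letter r)).prod :=
  prod_map_letter_eq_iff.2 (of_rel h)

end CongClosure

section AscProd

variable {M : Type*} [Monoid M] {f : ℕ → M} {a b c : ℕ}

/-- The product `f a * f (a + 1) * ⋯ * f (b - 1)`, in this order. The half-open range makes `a = b`
the empty product, so the image of the word `Iseg a b` is `ascProd f a (b + 1)`. -/
def ascProd (f : ℕ → M) (a b : ℕ) : M := ((List.Ico a b).map f).prod

theorem prod_map_Iseg (f : ℕ → M) (a b : ℕ) : ((Iseg a b).map f).prod = ascProd f a (b + 1) := rfl

theorem ascProd_self (f : ℕ → M) (a : ℕ) : ascProd f a a = 1 := by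
  simp [ascProd]

theorem ascProd_eq_mul (h : a < b) : ascProd f a b = f a * ascProd f (a + 1) b := by
  simp [ascProd, List.Ico.eq_cons h]

theorem ascProd_succ (h : a ≤ b) : ascProd f a (b + 1) = ascProd f a b * f b := by
  simp [ascProd, List.Ico.succ_top h]

theorem ascProd_mul_ascProd (hab : a ≤ b) (hbc : b ≤ c) :
    ascProd f a b * ascProd f b c = ascProd f a c := by
  simp [ascProd, ← List.Ico.append_consecutive hab hbc]

theorem commute_ascProd {x : M} (h : ∀ i, a ≤ i → i < b → Commute x (f i)) :
    Commute x (ascProd f a b) := by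
  refine Commute.list_prod_right _ _ fun y hy => ?_
  obtain ⟨i, hi, rfl⟩ := List.mem_map.1 hy
  rw [List.Ico.mem] at hi
  exact h i hi.1 hi.2

end AscProd

/-- The elements `f 1, …, f n` of a monoid satisfy the defining relations of `Q_n`. The values of
`f` outside `{1, …, n}` are irrelevant. -/
structure QFamily {M : Type*} [Monoid M] (n : ℕ) (f : ℕ → M) : Prop where
  idem {i : ℕ} : 1 ≤ i → i ≤ n → f i * f i = f i
  comm {i j : ℕ} : 1 ≤ i → i + 2 ≤ j → j ≤ n → Commute (f i) (f j)
  braid_left {k : ℕ} : 1 ≤ k → k + 1 ≤ n →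
    f k * f (k + 1) * f k * f (k + 1) = f (k + 1) * f k * f (k + 1)
  braid_right {k : ℕ} : 1 ≤ k → k + 1 ≤ n →
    f (k + 1) * f k * f (k + 1) * f k = f (k + 1) * f k * f (k + 1)

theorem qFamily_letter (n : ℕ) : QFamily n (CongClosure.letter (QRel n)) where
  idem {i} hi hin := by
    simpa using CongClosure.prod_map_letter_eq_of_rel (QRel.ofP (.idem i hi hin))
  comm {i j} hi hij hj := by
    simpa [Commute, SemiconjBy] using CongClosure.prod_map_letter_eq_of_rel
      (QRel.ofP (.comm i j hi (by omega) (by omega) hj (.inl hij)))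
  braid_left {k} hk hkn := by
    simpa [mul_assoc] using CongClosure.prod_map_letter_eq_of_rel (QRel.braid1 k hk hkn)
  braid_right {k} hk hkn := by
    simpa [mul_assoc] using CongClosure.prod_map_letter_eq_of_rel (QRel.braid2 k hk hkn)

namespace QFamily

variable {M : Type*} [Monoid M] {n k m i : ℕ} {f : ℕ → M} {z : M}

theorem commute_ascProd_of_lt (hf : QFamily n f) (hi : 1 ≤ i) (hik : i + 2 ≤ k)
    (hm : m ≤ n + 1) : Commute (f i) (ascProd f k m) :=
  commute_ascProd fun _ hkj hjm => hf.comm hi (by omega) (by omega)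

theorem commute_ascProd_of_gt (hf : QFamily n f) (hk : 1 ≤ k) (hmi : m < i) (hi : i ≤ n) :
    Commute (f i) (ascProd f k m) :=
  commute_ascProd fun _ hkj _ => (hf.comm (hk.trans hkj) (by omega) hi).symm

theorem mul_ascProd_mul_of_gt (hf : QFamily n f) (hk : 1 ≤ k)
    (hz : ∀ j, k < j → j ≤ n → z * f j = z) (hkm : k ≤ m) (hmi : m < i) (hi : i ≤ n) :
    z * ascProd f k m * f i = z * ascProd f k m := by
  rw [mul_assoc, ← (hf.commute_ascProd_of_gt hk hmi hi).eq, ← mul_assoc,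
    hz i (by omega) hi]

theorem mul_ascProd_braid (hf : QFamily n f) (hk : 1 ≤ k)
    (hz : ∀ j, k < j → j ≤ n → z * f j = z) (hki : k ≤ i) (hi : i + 1 ≤ n) :
    z * ascProd f k i * (f i * f (i + 1) * f i) = z * ascProd f k i * (f i * f (i + 1)) := by
  have hins : z * ascProd f k i * f (i + 1) = z * ascProd f k i :=
    hf.mul_ascProd_mul_of_gt hk hz hki i.lt_succ_self hi
  calc z * ascProd f k i * (f i * f (i + 1) * f i)
      = z * ascProd f k i * f (i + 1) * (f i * f (i + 1) * f i) := by rw [hins]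
    _ = z * ascProd f k i * (f (i + 1) * f i * f (i + 1) * f i) := by simp only [mul_assoc]
    _ = z * ascProd f k i * f (i + 1) * (f i * f (i + 1)) := by
      rw [hf.braid_right (hk.trans hki) hi]; simp only [mul_assoc]
    _ = z * ascProd f k i * (f i * f (i + 1)) := by rw [hins]

theorem mul_ascProd_mul_of_lt (hf : QFamily n f) (hk : 1 ≤ k)
    (hz : ∀ j, k < j → j ≤ n → z * f j = z) (hki : k ≤ i) (him : i < m) (hm : m ≤ n + 1) :
    z * ascProd f k m * f i = z * ascProd f k m := by
  rcases Nat.eq_or_lt_of_le him with rfl | him'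
  · rw [ascProd_succ hki, mul_assoc, mul_assoc, hf.idem (hk.trans hki) (by omega)]
  · have hsplit : ascProd f k m = ascProd f k i * (f i * f (i + 1)) * ascProd f (i + 2) m := by
      rw [← ascProd_mul_ascProd hki him.le, ascProd_eq_mul him, ascProd_eq_mul him']
      simp only [mul_assoc]
    have hcomm : Commute (f i) (ascProd f (i + 2) m) :=
      hf.commute_ascProd_of_lt (hk.trans hki) le_rfl hm
    calc z * ascProd f k m * f i
        = z * ascProd f k i * (f i * f (i + 1) * f i) * ascProd f (i + 2) m := by
          rw [hsplit]; simp only [mul_assoc, hcomm.eq]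
      _ = z * ascProd f k m := by
          rw [hf.mul_ascProd_braid hk hz hki (by omega), hsplit]; simp only [mul_assoc]

theorem mul_ascProd_mul_of_ne (hf : QFamily n f) (hk : 1 ≤ k)
    (hz : ∀ j, k < j → j ≤ n → z * f j = z) (hkm : k ≤ m) (hm : m ≤ n + 1)
    (hki : k ≤ i) (hi : i ≤ n) (him : i ≠ m) :
    z * ascProd f k m * f i = z * ascProd f k m :=
  him.lt_or_gt.elim (hf.mul_ascProd_mul_of_lt hk hz hki · hm)
    (hf.mul_ascProd_mul_of_gt hk hz hkm · hi)

theorem exists_mul_prod_eq_mul_ascProd (hf : QFamily n f) (hk : 1 ≤ k) (hkn : k ≤ n + 1)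
    (hz : ∀ j, k < j → j ≤ n → z * f j = z) {W : List ℕ} (hW : ∀ j ∈ W, k ≤ j ∧ j ≤ n) :
    ∃ m, k ≤ m ∧ m ≤ n + 1 ∧ z * (W.map f).prod = z * ascProd f k m := by
  induction W using List.reverseRecOn with
  | nil => exact ⟨k, le_rfl, hkn, by rw [ascProd_self, List.map_nil, List.prod_nil]⟩
  | append_singleton W i ih =>
    obtain ⟨m, hkm, hm, hWm⟩ := ih fun j hj => hW j (List.mem_append_left _ hj)
    obtain ⟨hki, hi⟩ := hW i (by simp)
    have hstep : z * ((W ++ [i]).map f).prod = z * ascProd f k m * f i := by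
      simp [← mul_assoc, hWm]
    rcases eq_or_ne i m with rfl | him
    · exact ⟨i + 1, by omega, by omega, by rw [hstep, ascProd_succ hkm, mul_assoc]⟩
    · exact ⟨m, hkm, hm, by rw [hstep, hf.mul_ascProd_mul_of_ne hk hz hkm hm hki hi him]⟩

theorem exists_word_absorbing (hf : QFamily n f) (hk : 1 ≤ k) :
    ∃ I : List ℕ, (∀ j ∈ I, k ≤ j ∧ j ≤ n) ∧
      ∀ j, k ≤ j → j ≤ n → (I.map f).prod * f j = (I.map f).prod := by
  induction hd : n + 1 - k generalizing k with
  | zero => exact ⟨[], by simp, by omega⟩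
  | succ d ih =>
    obtain ⟨I, hI, habs⟩ := ih (k := k + 1) (by omega) (by omega)
    refine ⟨I ++ Iseg k n, fun j hj => ?_, fun j hkj hj => ?_⟩
    · rcases List.mem_append.1 hj with hj | hj
      · exact ⟨by have := hI j hj; omega, (hI j hj).2⟩
      · rw [Iseg, List.mem_range'_1] at hj
        omega
    · rw [List.map_append, List.prod_append, prod_map_Iseg]
      exact hf.mul_ascProd_mul_of_ne hk habs (by omega) le_rfl hkj hj (by omega)

theorem mul_ascProd_mul_ascProd (hf : QFamily n f) (hk : 1 ≤ k) (hkm : k < m) {l : ℕ} (hml : m ≤ l)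
    (hl : l ≤ n + 1) :
    f k * (ascProd f (k + 1) m * ascProd f k l) = ascProd f (k + 1) m * ascProd f k l := by
  induction hd : m - (k + 1) generalizing k with
  | zero =>
    obtain rfl : m = k + 1 := by omega
    rw [ascProd_self, one_mul, ascProd_eq_mul (by omega), ← mul_assoc, hf.idem hk (by omega)]
  | succ d ih =>
    set t := ascProd f (k + 2) m * ascProd f (k + 1) l with ht
    have hcomm : Commute (f k) (ascProd f (k + 2) m) :=
      hf.commute_ascProd_of_lt hk le_rfl (by omega)
    have hfix : f (k + 1) * t = t := ih (by omega) (by omega) (by omega)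
    have hexpand : ascProd f (k + 1) m * ascProd f k l = f (k + 1) * f k * f (k + 1) * t := by
      calc ascProd f (k + 1) m * ascProd f k l
          = f (k + 1) * (ascProd f (k + 2) m * f k) * ascProd f (k + 1) l := by
            rw [ascProd_eq_mul (a := k + 1) (by omega), ascProd_eq_mul (a := k) (by omega)]
            simp only [mul_assoc]
        _ = f (k + 1) * f k * t := by rw [← hcomm.eq, ht]; simp only [mul_assoc]
        _ = f (k + 1) * f k * f (k + 1) * t := by rw [mul_assoc _ (f (k + 1)) t, hfix]
    calc f k * (ascProd f (k + 1) m * ascProd f k l)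
        = f k * f (k + 1) * f k * f (k + 1) * t := by rw [hexpand]; simp only [mul_assoc]
      _ = ascProd f (k + 1) m * ascProd f k l := by rw [hf.braid_left hk (by omega), hexpand]

theorem mul_mul_prod_mul_ascProd (hf : QFamily n f) (hk : 1 ≤ k) (hkn : k ≤ n)
    (hcomm : Commute (f k) z) (hz : ∀ j, k + 2 ≤ j → j ≤ n → z * f j = z)
    {W : List ℕ} (hW : ∀ j ∈ W, k + 1 ≤ j ∧ j ≤ n) :
    f k * (z * ((W.map f).prod * ascProd f k (n + 1))) =
      z * ((W.map f).prod * ascProd f k (n + 1)) := by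
  obtain ⟨m, hkm, hm, hWm⟩ := hf.exists_mul_prod_eq_mul_ascProd (by omega) (by omega) hz hW
  rw [← mul_assoc z, hWm, mul_assoc z, ← mul_assoc (f k), hcomm.eq, mul_assoc z,
    hf.mul_ascProd_mul_ascProd hk hkm hm le_rfl]

end QFamily

theorem QCong.exists_cons_append_Iseg {n k : ℕ} (hk : 1 ≤ k) (hkn : k ≤ n) {W : List ℕ}
    (hW : ∀ j ∈ W, k + 1 ≤ j ∧ j ≤ n) :
    ∃ I : List ℕ, (∀ j ∈ I, k + 2 ≤ j ∧ j ≤ n) ∧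
      QCong n (k :: I ++ (W ++ Iseg k n)) (I ++ (W ++ Iseg k n)) := by
  have hf := qFamily_letter n
  obtain ⟨I, hI, habs⟩ := hf.exists_word_absorbing (k := k + 2) (by omega)
  have hcomm : Commute (CongClosure.letter (QRel n) k) (I.map (CongClosure.letter (QRel n))).prod :=
    Commute.list_prod_right _ _ <| List.forall_mem_map.2 fun j hj =>
      hf.comm hk (hI j hj).1 (hI j hj).2
  refine ⟨I, hI, CongClosure.prod_map_letter_eq_iff.1 ?_⟩
  simpa [prod_map_Iseg, mul_assoc] using hf.mul_mul_prod_mul_ascProd hk hkn hcomm habs hW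

theorem PCong.cons_append_singleton {n k : ℕ} (hk : 1 ≤ k) {I : List ℕ}
    (hI : ∀ j ∈ I, k + 2 ≤ j ∧ j ≤ n) : PCong n (k :: I) (I ++ [k]) := by
  induction I with
  | nil => exact .refl _
  | cons a I ih =>
    obtain ⟨⟨hka, ha⟩, hI⟩ := List.forall_mem_cons.1 hI
    have hswap : PCong n (k :: a :: I) (a :: k :: I) :=
      CongClosure.rel (r := PRel n) [] I (.comm k a hk (by omega) (by omega) ha (.inl hka))
    exact hswap.trans (CongClosure.append_left [a] (ih hI))

namespace RCong

variable {n k : ℕ}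

theorem cons_append_Iseg (hk : 1 ≤ k) (hkn : k ≤ n) {W : List ℕ}
    (hW : ∀ j ∈ W, k + 1 ≤ j ∧ j ≤ n) :
    RCong n (k :: (W ++ Iseg k n)) (W ++ Iseg k n) := by
  obtain ⟨I, hI, hIQ⟩ := QCong.exists_cons_append_Iseg hk hkn hW
  have hIn : InF n I := fun j hj => ⟨by have := hI j hj; omega, (hI j hj).2⟩
  have hJn : InF n (W ++ Iseg k n) := by
    simp only [InF, List.forall_mem_append, Iseg, List.mem_range'_1]
    exact ⟨fun j hj => by have := hW j hj; omega, fun j hj => by omega⟩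
  exact CongClosure.of_rel (.absorb k I _ hk hkn hIn hJn hIQ
    (PCong.cons_append_singleton hk hI) fun hkI => by have := hI k hkI; omega)

theorem append_Iseg_filter_ne (hk : 1 ≤ k) (hkn : k ≤ n) {L : List ℕ}
    (hL : ∀ j ∈ L, k ≤ j ∧ j ≤ n) :
    RCong n (L ++ Iseg k n) (L.filter (fun a => a ≠ k) ++ Iseg k n) := by
  induction L with
  | nil => exact .refl _
  | cons a L ih =>
    obtain ⟨-, hL⟩ := List.forall_mem_cons.1 hL
    have hstep := CongClosure.append_left [a] (ih hL)
    rcases eq_or_ne a k with rfl | hak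
    · rw [List.filter_cons_of_neg (by simp)]
      refine hstep.trans (cons_append_Iseg hk hkn fun j hj => ?_)
      obtain ⟨hjL, hja⟩ := List.mem_filter.1 hj
      have := hL j hjL
      have := of_decide_eq_true hja
      omega
    · rw [List.filter_cons_of_pos (by simpa using hak)]
      exact hstep

end RCong

theorem bounds_of_mem_sh {n k : ℕ} {Z : List ℕ} (hZ : InF (n - k) Z) :
    ∀ j ∈ sh k Z, k + 1 ≤ j ∧ j ≤ n :=
  List.forall_mem_map.2 fun i hi => by have := hZ i hi; omega

/-- Statements B(n) and C(n): (B) for every `Z ∈ F_{n−1}`, `1·sh₁(Z)·I₁ⁿ ∼ sh₁(Z)·I₁ⁿ`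
in `Q_n'`; (C) for every `L ∈ F_n`, `L·I₁ⁿ ∼ M·I₁ⁿ` in `Q_n'`, where `M` is obtained
from `L` by deleting all occurrences of the letter `1`. -/
theorem statement_B_and_C (n : ℕ) (hn : 1 ≤ n) :
    (∀ Z : List ℕ, InF (n - 1) Z →
      RCong n ([1] ++ sh 1 Z ++ Iseg 1 n) (sh 1 Z ++ Iseg 1 n)) ∧
    (∀ L : List ℕ, InF n L →
      RCong n (L ++ Iseg 1 n) (L.filter (fun a => a ≠ 1) ++ Iseg 1 n)) := by
  refine ⟨fun Z hZ => ?_, fun L hL => RCong.append_Iseg_filter_ne le_rfl hn hL⟩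
  rw [List.append_assoc]
  exact RCong.cons_append_Iseg le_rfl hn (bounds_of_mem_sh hZ)
end
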